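/- Define the rational functions of s ∈ ℂ: t(s) = −2⁸·s³(s²−5)/((s−1)⁵(s+3)³(s²−4s−1)) and y(s) = −2⁶·s²/((s−1)(s+3)(s²+3)(s²−4s−1)). Then for every s ∈ ℂ such that s ≠ 1, s ≠ −3, s²−4s−1 ≠ 0, s²+3 ≠ 0, t'(s) ≠ 0, t(s) ∉ {0,1}, and y(s) ∉ {0, 1, t(s)}, the pair (t, y) is a parametric solution of the sixth Painlevé equation PVI(α,β,γ,δ) at s with θ-tuple (θ₀, θ₁, θ_t, θ_∞) = (1/5, 1/5, 1/5, 1/5), i.e. α = 8/25, β = −1/50, γ = 1/50, δ = 12/25. -/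

import Mathlib

noncomputable def tFun13 : ℂ → ℂ := fun s => -(2^8*s^3*(s^2-5))/((s-1)^5*(s+3)^3*(s^2-4*s-1))

noncomputable def yFun13 : ℂ → ℂ := fun s => -(2^6*s^2)/((s-1)*(s+3)*(s^2+3)*(s^2-4*s-1))

/-!
The functions `t`, `t - 1`, `y`, `y - 1`, `y - t` and `dt/ds` are, up to constants, products of
integer powers of the nine polynomials `s`, `s ± 1`, `s ± 3`, `s² ± 4s - 1`, `s² + 3`, `s² - 5`.
Where `t` and `y` are finite and `t ∉ {0, 1}`, none of the nine vanishes, so `p = dy/dt`, `dp/ds`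
and every coefficient of the Painlevé equation are explicit rational functions of `s` whose
denominators are monomials in these polynomials. Clearing denominators leaves a polynomial identity
in `s`.
-/

-- `field_simp` puts the quadratic factors into Horner form and looks for this shape of hypothesis.
lemma mul_sub_sub_ne_zero_of_sq {R : Type*} [CommRing R] {x a b : R} (h : x ^ 2 - a * x - b ≠ 0) :
    x * (x - a) - b ≠ 0 := by
  convert h using 1
  ring

lemma mul_add_sub_ne_zero_of_sq {R : Type*} [CommRing R] {x a b : R} (h : x ^ 2 + a * x - b ≠ 0) :
    x * (x + a) - b ≠ 0 := by
  convert h using 1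
  ring

section

variable {s : ℂ}

lemma tFun13_sub_one (hsub₁ : s - 1 ≠ 0) (hadd₃ : s + 3 ≠ 0) (hc : s ^ 2 - 4 * s - 1 ≠ 0) :
    tFun13 s - 1 = -((s + 1) ^ 5 * (s - 3) ^ 3 * (s ^ 2 + 4 * s - 1)) /
      ((s - 1) ^ 5 * (s + 3) ^ 3 * (s ^ 2 - 4 * s - 1)) := by
  rw [tFun13, div_sub_one (by positivity)]
  ring

lemma yFun13_sub_one (hsub₁ : s - 1 ≠ 0) (hadd₃ : s + 3 ≠ 0) (hc : s ^ 2 - 4 * s - 1 ≠ 0)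
    (hd : s ^ 2 + 3 ≠ 0) :
    yFun13 s - 1 = -((s + 1) ^ 4 * (s - 3) ^ 2) /
      ((s - 1) * (s + 3) * (s ^ 2 + 3) * (s ^ 2 - 4 * s - 1)) := by
  rw [yFun13, div_sub_one (by positivity)]
  ring

lemma yFun13_sub_tFun13 (hsub₁ : s - 1 ≠ 0) (hadd₃ : s + 3 ≠ 0) (hd : s ^ 2 + 3 ≠ 0) :
    yFun13 s - tFun13 s = -(2 ^ 6 * s ^ 2 * (s + 1) ^ 4 * (s - 3) ^ 2) /
      ((s - 1) ^ 5 * (s + 3) ^ 3 * (s ^ 2 + 3) * (s ^ 2 - 4 * s - 1)) := by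
  rw [tFun13, yFun13]
  field_simp
  ring

/-- The parameter values at which `tFun13` and `yFun13` have no pole and `tFun13` avoids `0` and
`1`, encoded as the non-vanishing of a single polynomial, which makes openness immediate. -/
def nondegenerateLocus13 : Set ℂ :=
  {s | s * (s - 1) * (s + 1) * (s + 3) * (s - 3) * (s ^ 2 - 4 * s - 1) * (s ^ 2 + 3) *
    (s ^ 2 - 5) * (s ^ 2 + 4 * s - 1) ≠ 0}

lemma mem_nondegenerateLocus13 :
    s ∈ nondegenerateLocus13 ↔ s ≠ 0 ∧ s - 1 ≠ 0 ∧ s + 1 ≠ 0 ∧ s + 3 ≠ 0 ∧ s - 3 ≠ 0 ∧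
      s ^ 2 - 4 * s - 1 ≠ 0 ∧ s ^ 2 + 3 ≠ 0 ∧ s ^ 2 - 5 ≠ 0 ∧ s ^ 2 + 4 * s - 1 ≠ 0 := by
  simp only [nondegenerateLocus13, Set.mem_ofPred_eq, mul_ne_zero_iff, and_assoc]

lemma isOpen_nondegenerateLocus13 : IsOpen nondegenerateLocus13 :=
  isOpen_ne_fun (by fun_prop) continuous_const

lemma mem_nondegenerateLocus13_of_tFun13_ne (hsub₁ : s - 1 ≠ 0) (hadd₃ : s + 3 ≠ 0)
    (hc : s ^ 2 - 4 * s - 1 ≠ 0) (hd : s ^ 2 + 3 ≠ 0) (ht₀ : tFun13 s ≠ 0) (ht₁ : tFun13 s ≠ 1) :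
    s ∈ nondegenerateLocus13 := by
  rw [← sub_ne_zero, tFun13_sub_one hsub₁ hadd₃ hc] at ht₁
  simp only [tFun13, ne_eq, div_eq_zero_iff, neg_eq_zero, mul_eq_zero, pow_eq_zero_iff,
    OfNat.ofNat_ne_zero, not_false_eq_true, not_or] at ht₀ ht₁
  exact mem_nondegenerateLocus13.2 (by tauto)

lemma hasDerivAt_tFun13 (hsub₁ : s - 1 ≠ 0) (hadd₃ : s + 3 ≠ 0) (hc : s ^ 2 - 4 * s - 1 ≠ 0) :
    HasDerivAt tFun13 (1280 * s ^ 2 * (s + 1) ^ 4 * (s - 3) ^ 2 /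
      ((s - 1) ^ 6 * (s + 3) ^ 4 * (s ^ 2 - 4 * s - 1) ^ 2)) s := by
  have hid := hasDerivAt_id' s
  have numerator :=
    (((hid.fun_pow 3).const_mul (2 ^ 8)).fun_mul ((hid.fun_pow 2).sub_const 5)).fun_neg
  have denominator := (((hid.sub_const 1).fun_pow 5).fun_mul ((hid.add_const 3).fun_pow 3)).fun_mul
    (((hid.fun_pow 2).fun_sub (hid.const_mul 4)).sub_const 1)
  refine (numerator.fun_div denominator (by positivity)).congr_deriv ?_
  push_cast
  field_simp
  ring

lemma hasDerivAt_yFun13 (hsub₁ : s - 1 ≠ 0) (hadd₃ : s + 3 ≠ 0) (hc : s ^ 2 - 4 * s - 1 ≠ 0)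
    (hd : s ^ 2 + 3 ≠ 0) :
    HasDerivAt yFun13 (128 * s * (s + 1) ^ 3 * (s - 3) * (2 * s ^ 2 - 3 * s + 3) /
      ((s - 1) ^ 2 * (s + 3) ^ 2 * (s ^ 2 - 4 * s - 1) ^ 2 * (s ^ 2 + 3) ^ 2)) s := by
  have hid := hasDerivAt_id' s
  have numerator := ((hid.fun_pow 2).const_mul (2 ^ 6)).fun_neg
  have denominator := (((hid.sub_const 1).fun_mul (hid.add_const 3)).fun_mul
    ((hid.fun_pow 2).add_const 3)).fun_mul
      (((hid.fun_pow 2).fun_sub (hid.const_mul 4)).sub_const 1)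
  refine (numerator.fun_div denominator (by positivity)).congr_deriv ?_
  push_cast
  field_simp
  ring

/-- The derivative `p = dy/dt` along the curve `(tFun13, yFun13)`, as a function of the
parameter. -/
noncomputable def slopeFun13 (s : ℂ) : ℂ :=
  (s - 1) ^ 4 * (s + 3) ^ 2 * (2 * s ^ 2 - 3 * s + 3) /
    (10 * s * (s + 1) * (s - 3) * (s ^ 2 + 3) ^ 2)

lemma hasDerivAt_slopeFun13 (hs₀ : s ≠ 0) (hadd₁ : s + 1 ≠ 0) (hsub₃ : s - 3 ≠ 0)
    (hd : s ^ 2 + 3 ≠ 0) :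
    HasDerivAt slopeFun13
      ((s - 1) ^ 3 * (s + 3) * (s ^ 2 - 4 * s - 1) * (2 * s ^ 6 + 45 * s ^ 4 + 81) /
        (10 * s ^ 2 * (s + 1) ^ 2 * (s - 3) ^ 2 * (s ^ 2 + 3) ^ 3)) s := by
  have hid := hasDerivAt_id' s
  have numerator := (((hid.sub_const 1).fun_pow 4).fun_mul ((hid.add_const 3).fun_pow 2)).fun_mul
    ((((hid.fun_pow 2).const_mul 2).fun_sub (hid.const_mul 3)).add_const 3)
  have denominator := (((hid.const_mul 10).fun_mul (hid.add_const 1)).fun_mul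
    (hid.sub_const 3)).fun_mul (((hid.fun_pow 2).add_const 3).fun_pow 2)
  refine (numerator.fun_div denominator (by simp [hs₀, hadd₁, hsub₃, hd])).congr_deriv ?_
  push_cast
  field_simp
  ring

lemma deriv_yFun13_div_deriv_tFun13 (hs : s ∈ nondegenerateLocus13) :
    deriv yFun13 s / deriv tFun13 s = slopeFun13 s := by
  obtain ⟨hs₀, hsub₁, hadd₁, hadd₃, hsub₃, hc, hd, -, -⟩ := mem_nondegenerateLocus13.1 hs
  rw [(hasDerivAt_yFun13 hsub₁ hadd₃ hc hd).deriv, (hasDerivAt_tFun13 hsub₁ hadd₃ hc).deriv,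
    slopeFun13]
  field_simp [mul_sub_sub_ne_zero_of_sq hc]
  ring

lemma deriv_deriv_yFun13_div_deriv_tFun13 (hs : s ∈ nondegenerateLocus13) :
    deriv (fun u ↦ deriv yFun13 u / deriv tFun13 u) s = deriv slopeFun13 s :=
  Filter.EventuallyEq.deriv_eq <| (isOpen_nondegenerateLocus13.eventually_mem hs).mono
    fun _ ↦ deriv_yFun13_div_deriv_tFun13

lemma one_div_yFun13_add_one_div_add_one_div (hs : s ∈ nondegenerateLocus13) :
    1 / yFun13 s + 1 / (yFun13 s - 1) + 1 / (yFun13 s - tFun13 s) =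
      -((s - 1) * (s + 3) * (s ^ 2 - 4 * s - 1) * (s ^ 2 + 3) *
        (s ^ 6 - 9 * s ^ 4 + 63 * s ^ 2 + 9)) / (32 * s ^ 2 * (s + 1) ^ 4 * (s - 3) ^ 2) := by
  obtain ⟨hs₀, hsub₁, hadd₁, hadd₃, hsub₃, hc, hd, -, -⟩ := mem_nondegenerateLocus13.1 hs
  rw [yFun13_sub_one hsub₁ hadd₃ hc hd, yFun13_sub_tFun13 hsub₁ hadd₃ hd, yFun13]
  field_simp
  ring

lemma one_div_tFun13_add_one_div_add_one_div (hs : s ∈ nondegenerateLocus13) :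
    1 / tFun13 s + 1 / (tFun13 s - 1) + 1 / (yFun13 s - tFun13 s) =
      -((s - 1) ^ 5 * (s + 3) ^ 3 * (s ^ 2 - 4 * s - 1) *
        (s ^ 10 + 4 * s ^ 9 - 17 * s ^ 8 - 56 * s ^ 7 + 114 * s ^ 6 + 432 * s ^ 5 - 410 * s ^ 4
          - 1224 * s ^ 3 + 285 * s ^ 2 - 180 * s + 27)) /
      (2 ^ 8 * s ^ 3 * (s + 1) ^ 5 * (s - 3) ^ 3 * (s ^ 2 - 5) * (s ^ 2 + 4 * s - 1)) := by
  obtain ⟨hs₀, hsub₁, hadd₁, hadd₃, hsub₃, hc, hd, he, hk⟩ := mem_nondegenerateLocus13.1 hs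
  rw [tFun13_sub_one hsub₁ hadd₃ hc, yFun13_sub_tFun13 hsub₁ hadd₃ hd, tFun13]
  field_simp [mul_add_sub_ne_zero_of_sq hk]
  ring

lemma painleve_prefactor_eq (hs : s ∈ nondegenerateLocus13) :
    yFun13 s * (yFun13 s - 1) * (yFun13 s - tFun13 s) / (tFun13 s ^ 2 * (tFun13 s - 1) ^ 2) =
      -((s - 1) ^ 13 * (s + 3) ^ 7 * (s ^ 2 - 4 * s - 1)) /
        (16 * s ^ 2 * (s + 1) ^ 2 * (s - 3) ^ 2 * (s ^ 2 + 3) ^ 3 * (s ^ 2 - 5) ^ 2 *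
          (s ^ 2 + 4 * s - 1) ^ 2) := by
  obtain ⟨hs₀, hsub₁, hadd₁, hadd₃, hsub₃, hc, hd, -, -⟩ := mem_nondegenerateLocus13.1 hs
  rw [yFun13_sub_one hsub₁ hadd₃ hc hd, tFun13_sub_one hsub₁ hadd₃ hc,
    yFun13_sub_tFun13 hsub₁ hadd₃ hd, tFun13, yFun13]
  field_simp
  ring

lemma painleve_parameter_sum_eq (hs : s ∈ nondegenerateLocus13) :
    (8 / 25 : ℂ) + (-1 / 50 : ℂ) * tFun13 s / yFun13 s ^ 2
        + (1 / 50 : ℂ) * (tFun13 s - 1) / (yFun13 s - 1) ^ 2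
        + (12 / 25 : ℂ) * tFun13 s * (tFun13 s - 1) / (yFun13 s - tFun13 s) ^ 2 =
      (s ^ 2 - 5) * (s ^ 2 + 4 * s - 1) *
        (25 * s ^ 6 - 58 * s ^ 5 + 223 * s ^ 4 - 332 * s ^ 3 + 263 * s ^ 2 - 474 * s + 225) /
      (800 * s * (s - 1) ^ 2 * (s + 1) ^ 3 * (s - 3)) := by
  obtain ⟨hs₀, hsub₁, hadd₁, hadd₃, hsub₃, hc, hd, -, -⟩ := mem_nondegenerateLocus13.1 hs
  rw [yFun13_sub_one hsub₁ hadd₃ hc hd, tFun13_sub_one hsub₁ hadd₃ hc,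
    yFun13_sub_tFun13 hsub₁ hadd₃ hd, tFun13, yFun13]
  field_simp [mul_sub_sub_ne_zero_of_sq hc]
  ring

end

/-- Parametric algebraic solution of the sixth Painlevé equation. -/
theorem stmt_13 (s : ℂ)
    (h1 : s ≠ 1)
    (h2 : s ≠ -3)
    (h3 : s^2-4*s-1 ≠ 0)
    (h4 : s^2+3 ≠ 0)
    (hdt : deriv tFun13 s ≠ 0)
    (ht0 : tFun13 s ≠ 0) (ht1 : tFun13 s ≠ 1)
    (hy0 : yFun13 s ≠ 0) (hy1 : yFun13 s ≠ 1) (hyt : yFun13 s ≠ tFun13 s) :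
    deriv (fun u => deriv yFun13 u / deriv tFun13 u) s / deriv tFun13 s =
      (1/2) * (1/(yFun13 s) + 1/(yFun13 s - 1) + 1/(yFun13 s - tFun13 s)) *
          (deriv yFun13 s / deriv tFun13 s)^2
        - (1/(tFun13 s) + 1/(tFun13 s - 1) + 1/(yFun13 s - tFun13 s)) *
          (deriv yFun13 s / deriv tFun13 s)
        + (yFun13 s * (yFun13 s - 1) * (yFun13 s - tFun13 s) /
            ((tFun13 s)^2 * (tFun13 s - 1)^2)) *
          ((8/25 : ℂ) + (-1/50 : ℂ) * tFun13 s / (yFun13 s)^2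
            + (1/50 : ℂ) * (tFun13 s - 1) / (yFun13 s - 1)^2
            + (12/25 : ℂ) * tFun13 s * (tFun13 s - 1) / (yFun13 s - tFun13 s)^2) := by
  have hs : s ∈ nondegenerateLocus13 := mem_nondegenerateLocus13_of_tFun13_ne (sub_ne_zero.2 h1)
    (by rwa [Ne, add_eq_zero_iff_eq_neg]) h3 h4 ht0 ht1
  obtain ⟨hs₀, hsub₁, hadd₁, hadd₃, hsub₃, hc, hd, he, hk⟩ := mem_nondegenerateLocus13.1 hs
  rw [deriv_deriv_yFun13_div_deriv_tFun13 hs, deriv_yFun13_div_deriv_tFun13 hs,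
    (hasDerivAt_slopeFun13 hs₀ hadd₁ hsub₃ hd).deriv, (hasDerivAt_tFun13 hsub₁ hadd₃ hc).deriv,
    one_div_yFun13_add_one_div_add_one_div hs, one_div_tFun13_add_one_div_add_one_div hs,
    painleve_prefactor_eq hs, painleve_parameter_sum_eq hs, slopeFun13]
  field_simp [mul_add_sub_ne_zero_of_sq hk]
  ring
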